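/- arXiv:2309.10377 — 2 statements merged into one kernel-verified Lean document; each statement's English description precedes it below -/
import Mathlib

section
/- Let D = (V, A) be a directed graph with nonnegative arc costs c, let s, t ∈ V, and let p be a shortest simple s-t-path with ℓ arcs. Suppose q is a simple s-t-path with γ_{p,2}(q) < ℓ that is efficient with respect to γ_p and whose γ_p-cost is lexicographically smallest among all efficient simple s-t-paths q' with γ_{p,2}(q') < ℓ. Then q is a second shortest simple s-t-path: q ≠ p and c(q) ≤ c(r) for every simple s-t-path r ≠ p. -/
/-- The arcs of a walk, given as the list of consecutive vertex pairs. -/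
def arcsOf {V : Type*} (q : List V) : List (V × V) := q.zip q.tail

/-- `q` is a walk (a finite sequence of consecutive arcs, possibly repeating
nodes) from `s` to `t` in the digraph on `V` with arc relation `A`. -/
def IsDiWalk {V : Type*} (A : V → V → Prop) (s t : V) (q : List V) : Prop :=
  q ≠ [] ∧ q.head? = some s ∧ q.getLast? = some t ∧ q.Chain' A

/-- `q` is a simple path from `s` to `t`: a walk visiting no node twice. -/
def IsDiPath {V : Type*} (A : V → V → Prop) (s t : V) (q : List V) : Prop :=
  IsDiWalk A s t q ∧ q.Nodup

/-- The cost of a walk: the sum of the costs of its arcs. -/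
def pathCost {V : Type*} (c : V → V → NNReal) (q : List V) : NNReal :=
  ((arcsOf q).map fun e => c e.1 e.2).sum

/-- Second component `γ_{p,2}` of the biobjective cost: the number of arcs of
`q` (with multiplicity along `q`) that are arcs of `p`. -/
def gammaTwo {V : Type*} [DecidableEq V] (p q : List V) : ℕ :=
  ((arcsOf q).filter fun e => decide (e ∈ arcsOf p)).length

/-- `q` dominates `q'` w.r.t. the biobjective cost `γ_p = (pathCost c ·, gammaTwo p ·)`. -/
def DominatesBi {V : Type*} [DecidableEq V] (c : V → V → NNReal) (p q q' : List V) : Prop :=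
  pathCost c q ≤ pathCost c q' ∧ gammaTwo p q ≤ gammaTwo p q' ∧
    (pathCost c q < pathCost c q' ∨ gammaTwo p q < gammaTwo p q')

/-- A simple `s`-`t`-path is efficient w.r.t. `γ_p` if no simple `s`-`t`-path dominates it. -/
def EfficientPath {V : Type*} [DecidableEq V] (A : V → V → Prop) (c : V → V → NNReal)
    (s t : V) (p q : List V) : Prop :=
  IsDiPath A s t q ∧ ∀ r, IsDiPath A s t r → ¬ DominatesBi c p r q

/-- `p` is a shortest simple `s`-`t`-path w.r.t. `c`. -/
def IsShortestPath {V : Type*} (A : V → V → Prop) (c : V → V → NNReal)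
    (s t : V) (p : List V) : Prop :=
  IsDiPath A s t p ∧ ∀ r, IsDiPath A s t r → pathCost c p ≤ pathCost c r

/-- `p₂` is a second shortest simple `s`-`t`-path (w.r.t. the shortest path `p₁`). -/
def IsSecondShortestPath {V : Type*} (A : V → V → Prop) (c : V → V → NNReal)
    (s t : V) (p₁ p₂ : List V) : Prop :=
  IsDiPath A s t p₂ ∧ p₂ ≠ p₁ ∧
    ∀ r, IsDiPath A s t r → r ≠ p₁ → pathCost c p₂ ≤ pathCost c r

/-!
Along a simple path every node has at most one successor, so two walks from `s` that use only arcs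
of one simple path are comparable as prefixes. Hence a simple `s`-`t`-path containing every arc of
`p` is `p` itself, and the condition `γ_{p,2} < ℓ` separates `p` from all other simple paths. Every
simple path `r ≠ p` is weakly dominated by an efficient path, which then also has `γ_{p,2} < ℓ` and
costs at most `c(r)`; so a path that is cheapest among these efficient paths is cheapest among all
`r ≠ p`.
-/

theorem prefix_or_prefix_of_isChain {α : Type*} {R : α → α → Prop} (hR : Relator.RightUnique R)
    {l₁ l₂ : List α} (h₁ : l₁.IsChain R) (h₂ : l₂.IsChain R) (hhead : l₁.head? = l₂.head?) :
    l₁ <+: l₂ ∨ l₂ <+: l₁ := by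
  induction l₁ generalizing l₂ with
  | nil => exact .inl List.nil_prefix
  | cons a l₁ ih =>
    rcases l₂ with _ | ⟨a', l₂⟩
    · exact .inr List.nil_prefix
    obtain rfl : a = a' := by simpa using hhead
    simp only [List.cons_prefix_cons, true_and]
    rcases l₁ with _ | ⟨b, l₁⟩
    · exact .inl List.nil_prefix
    rcases l₂ with _ | ⟨b', l₂⟩
    · exact .inr List.nil_prefix
    obtain ⟨hab, h₁⟩ := List.isChain_cons_cons.1 h₁
    obtain ⟨hab', h₂⟩ := List.isChain_cons_cons.1 h₂
    exact ih h₁ h₂ (congrArg some (hR hab hab'))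

theorem eq_of_prefix_of_getLast?_eq {α : Type*} {l₁ l₂ : List α} (hprefix : l₁ <+: l₂)
    (hnodup : l₂.Nodup) (hlast : l₁.getLast? = l₂.getLast?) : l₁ = l₂ := by
  obtain ⟨l, rfl⟩ := hprefix
  rcases l.eq_nil_or_concat with rfl | ⟨l', a, rfl⟩
  · simp
  · have ha : a ∈ l₁ := List.mem_of_getLast? (by simpa using hlast)
    exact absurd (by simp) (hnodup.disjoint ha)

section Arcs

variable {V : Type*} {p q : List V}

theorem arcsOf_cons_cons (a b : V) (l : List V) :
    arcsOf (a :: b :: l) = (a, b) :: arcsOf (b :: l) :=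
  rfl

theorem map_fst_arcsOf (q : List V) : (arcsOf q).map Prod.fst = q.dropLast := by
  induction q using List.twoStepInduction with
  | nil => rfl
  | singleton a => rfl
  | cons_cons a b l _ ih => rw [arcsOf_cons_cons, List.map_cons, ih b, List.dropLast_cons_cons]

theorem nodup_map_fst_arcsOf (hq : q.Nodup) : ((arcsOf q).map Prod.fst).Nodup := by
  rw [map_fst_arcsOf]
  exact hq.sublist q.dropLast_sublist

theorem nodup_arcsOf (hq : q.Nodup) : (arcsOf q).Nodup :=
  (nodup_map_fst_arcsOf hq).of_map

theorem rightUnique_mem_arcsOf (hq : q.Nodup) :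
    Relator.RightUnique fun a b => (a, b) ∈ arcsOf q := fun _ _ _ hb hc =>
  congrArg Prod.snd (List.inj_on_of_nodup_map (nodup_map_fst_arcsOf hq) hb hc rfl)

theorem isChain_iff_forall_mem_arcsOf {R : V → V → Prop} :
    q.IsChain R ↔ ∀ e ∈ arcsOf q, R e.1 e.2 := by
  induction q using List.twoStepInduction with
  | nil => simp [arcsOf]
  | singleton a => simp [arcsOf]
  | cons_cons a b l _ ih =>
    rw [List.isChain_cons_cons, ih b, arcsOf_cons_cons, List.forall_mem_cons]

theorem eq_of_arcsOf_subset (hp : p.Nodup) (hq : q.Nodup) (hhead : p.head? = q.head?)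
    (hlast : p.getLast? = q.getLast?) (hsub : arcsOf p ⊆ arcsOf q) : p = q := by
  have hpchain : p.IsChain fun a b => (a, b) ∈ arcsOf q :=
    isChain_iff_forall_mem_arcsOf.2 fun _ he => hsub he
  have hqchain : q.IsChain fun a b => (a, b) ∈ arcsOf q :=
    isChain_iff_forall_mem_arcsOf.2 fun _ he => he
  rcases prefix_or_prefix_of_isChain (rightUnique_mem_arcsOf hq) hpchain hqchain hhead with
    hprefix | hprefix
  · exact eq_of_prefix_of_getLast?_eq hprefix hq hlast
  · exact (eq_of_prefix_of_getLast?_eq hprefix hp hlast.symm).symm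

end Arcs

section Paths

variable {V : Type*} {A : V → V → Prop} {s t : V} {p q : List V}

theorem eq_of_isDiPath_of_arcsOf_subset (hp : IsDiPath A s t p) (hq : IsDiPath A s t q)
    (hsub : arcsOf p ⊆ arcsOf q) : p = q := by
  obtain ⟨⟨-, hps, hpt, -⟩, hpnodup⟩ := hp
  obtain ⟨⟨-, hqs, hqt, -⟩, hqnodup⟩ := hq
  exact eq_of_arcsOf_subset hpnodup hqnodup (hps.trans hqs.symm) (hpt.trans hqt.symm) hsub

theorem finite_setOf_isDiPath [Finite V] (A : V → V → Prop) (s t : V) :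
    {q | IsDiPath A s t q}.Finite := by
  have := Fintype.ofFinite V
  exact (List.finite_length_le V (Fintype.card V)).subset fun _ hq => hq.2.length_le_card

end Paths

section BiobjectiveCost

variable {V : Type*} [DecidableEq V] {A : V → V → Prop} {c : V → V → NNReal} {s t : V}
  {p q : List V}

theorem gammaTwo_self (p : List V) : gammaTwo p p = (arcsOf p).length := by
  simp [gammaTwo]

theorem arcsOf_subset_of_length_le_gammaTwo (hq : q.Nodup)
    (hle : (arcsOf p).length ≤ gammaTwo p q) : arcsOf p ⊆ arcsOf q := by
  have hcommon : ((arcsOf q).filter fun e => decide (e ∈ arcsOf p)).Subperm (arcsOf p) :=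
    List.subperm_of_subset ((nodup_arcsOf hq).filter _) fun _ he =>
      of_decide_eq_true (List.mem_filter.1 he).2
  exact fun _ he => List.mem_of_mem_filter ((hcommon.perm_of_length_le hle).mem_iff.2 he)

theorem gammaTwo_lt_length_arcsOf_iff (hp : IsDiPath A s t p) (hq : IsDiPath A s t q) :
    gammaTwo p q < (arcsOf p).length ↔ q ≠ p := by
  refine ⟨?_, fun hne => ?_⟩
  · rintro hlt rfl
    exact hlt.ne (gammaTwo_self q)
  · by_contra! hle
    exact hne (eq_of_isDiPath_of_arcsOf_subset hp hq
      (arcsOf_subset_of_length_le_gammaTwo hq.2 hle)).symm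

/-- The biobjective cost `γ_p` of a walk, in the componentwise order on pairs, so that `<` is
dominance. -/
def biobjectiveCost (c : V → V → NNReal) (p q : List V) : NNReal × ℕ :=
  (pathCost c q, gammaTwo p q)

theorem dominatesBi_iff_biobjectiveCost_lt {q' : List V} :
    DominatesBi c p q q' ↔ biobjectiveCost c p q < biobjectiveCost c p q' := by
  simp only [DominatesBi, biobjectiveCost, Prod.mk_lt_mk]
  grind

theorem exists_efficientPath_biobjectiveCost_le
    (hwf : (pathCost c '' {r | IsDiPath A s t r}).IsWF) (p : List V) (hq : IsDiPath A s t q) :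
    ∃ m, EfficientPath A c s t p m ∧ biobjectiveCost c p m ≤ biobjectiveCost c p q := by
  have hpwo : (biobjectiveCost c p '' {r | IsDiPath A s t r}).IsPWO := by
    refine (hwf.isPWO.prod (Set.IsPWO.of_linearOrder (Set.univ : Set ℕ))).mono ?_
    rintro _ ⟨r, hr, rfl⟩
    exact ⟨Set.mem_image_of_mem _ hr, Set.mem_univ _⟩
  obtain ⟨_, hle, ⟨m, hm, rfl⟩, hmin⟩ := hpwo.exists_le_minimal (Set.mem_image_of_mem _ hq)
  refine ⟨m, ⟨hm, fun r hr hdom => ?_⟩, hle⟩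
  have hlt := dominatesBi_iff_biobjectiveCost_lt.1 hdom
  exact hlt.not_ge (hmin (Set.mem_image_of_mem _ hr) hlt.le)

end BiobjectiveCost

theorem lexSmallestEfficient_isSecondShortest_general {V : Type*} [DecidableEq V]
    {A : V → V → Prop} {c : V → V → NNReal} {s t : V} {p q : List V}
    (hwf : (pathCost c '' {r | IsDiPath A s t r}).IsWF)
    (hp : IsDiPath A s t p) (hq : IsDiPath A s t q) (hqp : gammaTwo p q < (arcsOf p).length)
    (hmin : ∀ q', EfficientPath A c s t p q' → gammaTwo p q' < (arcsOf p).length →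
      pathCost c q ≤ pathCost c q') :
    IsSecondShortestPath A c s t p q := by
  refine ⟨hq, (gammaTwo_lt_length_arcsOf_iff hp hq).1 hqp, fun r hr hrp => ?_⟩
  obtain ⟨m, hm, hcost, hgamma⟩ := exists_efficientPath_biobjectiveCost_le hwf p hr
  have hmp : gammaTwo p m < (arcsOf p).length :=
    hgamma.trans_lt ((gammaTwo_lt_length_arcsOf_iff hp hr).2 hrp)
  exact (hmin m hm hmp).trans hcost

/-- If `p` is a shortest simple `s`-`t`-path with `ℓ` arcs and `q` is an
efficient simple `s`-`t`-path with `γ_{p,2}(q) < ℓ` whose `γ_p`-cost is lexicographically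
smallest among all such efficient paths, then `q` is a second shortest simple `s`-`t`-path. -/
theorem lexSmallestEfficient_isSecondShortest {V : Type*} [Fintype V] [DecidableEq V]
    (A : V → V → Prop) (c : V → V → NNReal) (s t : V) (p : List V) (ℓ : ℕ)
    (hp : IsShortestPath A c s t p) (hℓ : (arcsOf p).length = ℓ)
    (q : List V) (hq : EfficientPath A c s t p q) (hq2 : gammaTwo p q < ℓ)
    (hlex : ∀ q', EfficientPath A c s t p q' → gammaTwo p q' < ℓ →
      pathCost c q < pathCost c q' ∨
        (pathCost c q = pathCost c q' ∧ gammaTwo p q ≤ gammaTwo p q')) :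
    q ≠ p ∧ ∀ r, IsDiPath A s t r → r ≠ p → pathCost c q ≤ pathCost c r := by
  subst hℓ
  exact (lexSmallestEfficient_isSecondShortest_general
    ((finite_setOf_isDiPath A s t).image _).isWF hp.1 hq.1 hq2 fun q' hq' hlt =>
      (hlex q' hq' hlt).elim le_of_lt fun h => h.1.le).2
end

section
/- Let D = (V, A) be a directed graph with nonnegative arc costs c, let p₁ be a shortest simple s-t-path, and let p₂ be a second shortest simple s-t-path. Write p₂ = p₁[s..v] ∘ (v,w) ∘ p₂[w..t], where p₁[s..v] is the longest common prefix of p₂ and p₁ and (v,w) is the first arc of p₂ after this prefix (so (v,w) is not an arc of p₁). Then the suffix p₂[w..t] is a shortest w-t-path in the graph obtained from D by deleting all nodes of the prefix p₂[s..v] = p₁[s..v] together with their incident arcs: for every simple w-t-path r in D avoiding all nodes of p₁[s..v], c(p₂[w..t]) ≤ c(r). -/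
/-!
If a simple `w`-`t`-path avoiding the prefix were cheaper than the suffix, splicing it onto the
prefix would give a simple `s`-`t`-path cheaper than `p₂`. The spliced path still begins with the
prefix followed by `w`, so it differs from `p₁`, contradicting the choice of `p₂`.
-/

theorem arcsOf_append_cons {V : Type*} (p : List V) (w : V) (q : List V) :
    arcsOf (p ++ w :: q) = arcsOf (p ++ [w]) ++ arcsOf (w :: q) := by
  induction p with
  | nil => simp [arcsOf]
  | cons a p ih => cases p <;> simp_all [arcsOf]

theorem pathCost_append_cons {V : Type*} (c : V → V → NNReal) (p : List V) (w : V) (q : List V) :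
    pathCost c (p ++ w :: q) = pathCost c (p ++ [w]) + pathCost c (w :: q) := by
  rw [pathCost, arcsOf_append_cons, List.map_append, List.sum_append, pathCost, pathCost]

section Paths

variable {V : Type*} {A : V → V → Prop} {s t w : V} {p q q' : List V}

theorem isDiWalk_append_cons_iff :
    IsDiWalk A s t (p ++ w :: q) ↔ IsDiWalk A s w (p ++ [w]) ∧ IsDiWalk A w t (w :: q) := by
  have hhead : (p ++ w :: q).head? = (p ++ [w]).head? := by cases p <;> rfl
  have hlast : (p ++ w :: q).getLast? = (w :: q).getLast? :=
    List.getLast?_append_of_ne_nil p (List.cons_ne_nil w q)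
  constructor
  · rintro ⟨-, hs, ht, hA⟩
    obtain ⟨hpre, hsuf⟩ := List.isChain_split.1 hA
    exact ⟨⟨List.concat_ne_nil w p, hhead ▸ hs, List.getLast?_concat, hpre⟩,
      List.cons_ne_nil w q, List.head?_cons, hlast ▸ ht, hsuf⟩
  · rintro ⟨⟨-, hs, -, hpre⟩, -, -, ht, hsuf⟩
    exact ⟨by simp, hhead ▸ hs, hlast ▸ ht, List.isChain_split.2 ⟨hpre, hsuf⟩⟩

theorem isDiPath_append_cons_iff :
    IsDiPath A s t (p ++ w :: q) ↔
      IsDiPath A s w (p ++ [w]) ∧ IsDiPath A w t (w :: q) ∧ p.Disjoint (w :: q) := by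
  have hnodup : (p ++ w :: q).Nodup ↔
      (p ++ [w]).Nodup ∧ (w :: q).Nodup ∧ p.Disjoint (w :: q) := by
    simp only [List.nodup_append', List.disjoint_cons_right, List.nodup_singleton]
    tauto
  rw [IsDiPath, isDiWalk_append_cons_iff, hnodup, IsDiPath, IsDiPath]
  tauto

theorem IsDiPath.replace_suffix (h : IsDiPath A s t (p ++ w :: q))
    (h' : IsDiPath A w t (w :: q')) (hdisj : p.Disjoint (w :: q')) :
    IsDiPath A s t (p ++ w :: q') :=
  isDiPath_append_cons_iff.2 ⟨(isDiPath_append_cons_iff.1 h).1, h', hdisj⟩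

end Paths

theorem secondShortest_suffix_shortest_general {V : Type*} {A : V → V → Prop}
    {c : V → V → NNReal} {s t w : V} {p₁ pre suf : List V}
    (hp₂ : IsSecondShortestPath A c s t p₁ (pre ++ w :: suf))
    (hdev : ¬ (pre ++ [w]) <+: p₁) {r : List V} (hr : IsDiPath A w t r)
    (hdisj : pre.Disjoint r) : pathCost c (w :: suf) ≤ pathCost c r := by
  obtain ⟨hpath, -, hmin⟩ := hp₂
  obtain ⟨q, rfl⟩ : ∃ q, r = w :: q := List.head?_eq_some_iff.1 hr.1.2.1
  have hne : pre ++ w :: q ≠ p₁ := by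
    rintro rfl
    exact hdev ⟨q, (List.append_cons pre w q).symm⟩
  have hle : pathCost c (pre ++ w :: suf) ≤ pathCost c (pre ++ w :: q) :=
    hmin _ (hpath.replace_suffix hr hdisj) hne
  rw [pathCost_append_cons c pre w suf, pathCost_append_cons c pre w q] at hle
  exact le_of_add_le_add_left hle

/-- Let `p₁` be a shortest and `p₂` a second shortest simple `s`-`t`-path,
and write `p₂ = pre ++ w :: suf` where `pre = p₁[s..v] = p₂[s..v]` is the longest common
prefix of `p₂` and `p₁` (so `pre` ends at the deviation node `v` and `(v,w)` is the
deviation arc). Then the suffix `w :: suf = p₂[w..t]` is a shortest `w`-`t`-path among the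
simple `w`-`t`-paths avoiding all nodes of the prefix. -/
theorem secondShortest_suffix_shortest {V : Type*}
    (A : V → V → Prop) (c : V → V → NNReal) (s t : V) (p₁ p₂ : List V)
    (hp₁ : IsShortestPath A c s t p₁)
    (hp₂ : IsSecondShortestPath A c s t p₁ p₂)
    (pre : List V) (v w : V) (suf : List V)
    (hsplit : p₂ = pre ++ w :: suf)
    (hv : pre.getLast? = some v)
    (hpre : pre <+: p₁)
    (hlongest : ¬ (pre ++ [w]) <+: p₁) :
    ∀ r, IsDiPath A w t r → (∀ x ∈ pre, x ∉ r) →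
      pathCost c (w :: suf) ≤ pathCost c r := by
  subst hsplit
  exact fun r hr hdisj => secondShortest_suffix_shortest_general hp₂ hlongest hr hdisj
end
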